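/- Let w(x) := K(x)·exp(2·∫₀^x f₁(u) du), so that w = v'. Then for Lebesgue-almost every x ∈ ℝ, w is differentiable at x with w'(x) = 1 + 2·f₁(x)·w(x); equivalently, v satisfies the equation (1/2)·v''(x) − f₁(x)·v'(x) = 1/2 for almost every x ∈ ℝ. -/

import Mathlib

open MeasureTheory intervalIntegral

/-!
For locally integrable `a` and `g`, put `A x = ∫ u in c..x, a u`. By the Lebesgue differentiation
theorem `A' = a` a.e.; since `exp ∘ (-A)` is continuous, `exp (-A) • g` is again locally integrable,
so its primitive is also differentiable a.e., and the product rule shows that the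
variation-of-constants formula solves `y' = a • y + g` at almost every point. The function `w` is
the solution for `a = 2 * f₁`, `g = 1` that vanishes at `0`.
-/

section VariationOfConstants

variable {E : Type*} [NormedAddCommGroup E] [NormedSpace ℝ E]

theorem continuous_primitive_of_locallyIntegrable {μ : Measure ℝ} [NullSingletonClass μ] {f : ℝ → E}
    (hf : LocallyIntegrable f μ) (c : ℝ) : Continuous fun x ↦ ∫ u in c..x, f u ∂μ :=
  continuous_primitive
    (fun _ _ ↦ (hf.integrableOn_isCompact isCompact_uIcc).intervalIntegrable) c

theorem locallyIntegrable_exp_neg_primitive_smul {a : ℝ → ℝ} {g : ℝ → E} {μ ν : Measure ℝ}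
    [NullSingletonClass μ] (ha : LocallyIntegrable a μ) (hg : LocallyIntegrable g ν) (c : ℝ) :
    LocallyIntegrable (fun z ↦ Real.exp (-∫ u in c..z, a u ∂μ) • g z) ν :=
  hg.continuous_smul (continuous_primitive_of_locallyIntegrable ha c).neg.rexp

theorem hasDerivAt_exp_smul_of_hasDerivAt_exp_neg_smul {A : ℝ → ℝ} {B : ℝ → E} {a x : ℝ} {b : E}
    (hA : HasDerivAt A a x) (hB : HasDerivAt B (Real.exp (-A x) • b) x) :
    HasDerivAt (fun y ↦ Real.exp (A y) • B y) (a • Real.exp (A x) • B x + b) x := by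
  have cancel : Real.exp (A x) • Real.exp (-A x) • b = b := by
    rw [smul_smul, ← Real.exp_add, add_neg_cancel, Real.exp_zero, one_smul]
  refine (hA.exp.smul hB).congr_deriv ?_
  rw [cancel, add_comm, mul_comm, mul_smul]

/-- The variation-of-constants (Duhamel) formula for the linear equation `y' = a • y + g` with
initial value `y c = y₀`, for a scalar coefficient `a` and a vector-valued forcing term `g`. -/
noncomputable def variationOfConstants (a : ℝ → ℝ) (g : ℝ → E) (c : ℝ) (y₀ : E) (x : ℝ) : E :=
  Real.exp (∫ u in c..x, a u) • (y₀ + ∫ z in c..x, Real.exp (-∫ u in c..z, a u) • g z)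

theorem ae_hasDerivAt_variationOfConstants [CompleteSpace E] {a : ℝ → ℝ} {g : ℝ → E}
    (ha : LocallyIntegrable a) (hg : LocallyIntegrable g) (c : ℝ) (y₀ : E) :
    ∀ᵐ x, HasDerivAt (variationOfConstants a g c y₀)
      (a x • variationOfConstants a g c y₀ x + g x) x := by
  filter_upwards [LocallyIntegrable.ae_hasDerivAt_integral ha,
    LocallyIntegrable.ae_hasDerivAt_integral (locallyIntegrable_exp_neg_primitive_smul ha hg c)]
    with x hA hB
  exact hasDerivAt_exp_smul_of_hasDerivAt_exp_neg_smul (hA c) ((hB c).const_add y₀)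

end VariationOfConstants

theorem w_hasDerivAt_ae_general
    (f₁ : ℝ → ℝ)
    (hloc : LocallyIntegrable f₁ volume)
    (K w : ℝ → ℝ)
    (hK : ∀ y : ℝ, K y = ∫ z in (0:ℝ)..y, Real.exp (-2 * ∫ u in (0:ℝ)..z, f₁ u))
    (hw : ∀ x : ℝ, w x = K x * Real.exp (2 * ∫ u in (0:ℝ)..x, f₁ u)) :
    ∀ᵐ x ∂(volume : Measure ℝ), HasDerivAt w (1 + 2 * f₁ x * w x) x := by
  have hw_eq : w = variationOfConstants (fun u ↦ 2 * f₁ u) (fun _ ↦ 1) 0 0 := by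
    funext x
    simp only [variationOfConstants, hw, hK, intervalIntegral.integral_const_mul, smul_eq_mul,
      mul_one, zero_add, neg_mul]
    exact mul_comm _ _
  rw [hw_eq]
  filter_upwards [ae_hasDerivAt_variationOfConstants (hloc.smul (2 : ℝ))
    (locallyIntegrable_const (1 : ℝ)) 0 0] with x hx
  exact hx.congr_deriv (add_comm _ _)

/-- With `K(y) = ∫₀^y exp(−2∫₀^z f₁) dz` and `w(x) = K(x)·exp(2∫₀^x f₁)` (so `w = v'`)
for a nonnegative locally integrable `f₁`, for Lebesgue-almost every `x` the function
`w` is differentiable at `x` with `w'(x) = 1 + 2·f₁(x)·w(x)`; i.e. `v` satisfies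
`(1/2)·v''(x) − f₁(x)·v'(x) = 1/2` for a.e. `x ∈ ℝ`. -/
theorem w_hasDerivAt_ae
    (f₁ : ℝ → ℝ) (hf₁ : ∀ u, 0 ≤ f₁ u)
    (hloc : LocallyIntegrable f₁ volume)
    (K w : ℝ → ℝ)
    (hK : ∀ y : ℝ, K y = ∫ z in (0:ℝ)..y, Real.exp (-2 * ∫ u in (0:ℝ)..z, f₁ u))
    (hw : ∀ x : ℝ, w x = K x * Real.exp (2 * ∫ u in (0:ℝ)..x, f₁ u)) :
    ∀ᵐ x ∂(volume : Measure ℝ), HasDerivAt w (1 + 2 * f₁ x * w x) x :=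
  w_hasDerivAt_ae_general f₁ hloc K w hK hw
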